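/- arXiv:2204.00995 — 2 statements merged into one kernel-verified Lean document; each statement's English description precedes it below -/
import Mathlib

section
/- (Heterogeneous version of Lemma 2.) Let A : Fin n → ℝ^{d×d} and B : Fin n → ℝ^{d×p} with A i = A j and B i = B j whenever c i = c j (agents in the same cell have the same dynamics), and let L̃' be the (n·d)×(n·d) block matrix whose (i,j) block is (if i = j then A i else 0) − (B i)·K·L_{ij}, where L_{ij} denotes the (i,j) d×d block of L. Suppose L · P_π = P_π · L_π; suppose there exist Q'_i ∈ ℝ^{q×q} (i ∈ Fin s) with (A r)·C = C·Q'_{c r} for every r ∈ Fin n, and Q''_{ij} ∈ ℝ^{q×q} (i, j ∈ Fin s) with (B r)·K·(L_π)_{c r, j}·C = C·Q''_{c r, j} for every r ∈ Fin n and j ∈ Fin s. Let Q' ∈ ℝ^{(s·q)×(s·q)} be the block matrix whose (i,j) block is (if i = j then Q'_i else 0) − Q''_{ij}. Then L̃' · P̃ = P̃ · Q', and consequently the column space of P̃ is invariant under the linear map x ↦ L̃'.mulVec x. -/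
open Matrix

/-- Characteristic matrix of a partition `c : Fin n → Fin s`. -/
noncomputable def charM (n s d : ℕ) (c : Fin n → Fin s) :
    Matrix (Fin n × Fin d) (Fin s × Fin d) ℝ :=
  fun ia jb => if c ia.1 = jb.1 ∧ ia.2 = jb.2 then 1 else 0

/-- Block diagonal matrix with `n` copies of `X` on the diagonal. -/
noncomputable def bdiag (n : ℕ) {d q : ℕ} (X : Matrix (Fin d) (Fin q) ℝ) :
    Matrix (Fin n × Fin d) (Fin n × Fin q) ℝ :=
  fun ia jb => if ia.1 = jb.1 then X ia.2 jb.2 else 0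

/-- The `(i,j)` block of a block matrix. -/
noncomputable def blockOf {n s d e : ℕ} (L : Matrix (Fin n × Fin d) (Fin s × Fin e) ℝ)
    (i : Fin n) (j : Fin s) : Matrix (Fin d) (Fin e) ℝ :=
  fun a b => L (i, a) (j, b)

/-!
Grouping rows and columns by agent, `L̃' = diag(A) - diag(B K) L`. Multiplying on the left by the
characteristic matrix `P` repeats the block row of a cell for each of its agents, so the two
intertwining hypotheses say blockwise that `diag(A) P̃ = P̃ diag(Q₁)` and
`diag(B K) P Lπ diag(C) = P̃ Q₂`; the latter left side is `diag(B K) L P̃` because `L P = P Lπ`.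
-/

section Range

variable {k l m n R : Type*} [Fintype k] [Fintype m] [Fintype n] [CommSemiring R]

theorem map_range_mulVecLin_le_of_mul_eq_mul {M : Matrix l m R} {P : Matrix m n R}
    {P' : Matrix l k R} {Q : Matrix k n R} (h : M * P = P' * Q) :
    Submodule.map M.mulVecLin (LinearMap.range P.mulVecLin) ≤ LinearMap.range P'.mulVecLin := by
  rw [← LinearMap.range_comp, ← mulVecLin_mul, h, mulVecLin_mul]
  exact LinearMap.range_comp_le_range _ _

end Range

section Blocks

variable {ι κ μ d e f R : Type*}

theorem comp_sub [Sub R] (M N : Matrix ι κ (Matrix d e R)) :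
    comp _ _ _ _ R (M - N) = comp _ _ _ _ R M - comp _ _ _ _ R N :=
  rfl

theorem eq_comp_diagonal_sub [DecidableEq ι] [Zero R] [Sub R] {M : Matrix (ι × d) (ι × e) R}
    {X : ι → Matrix d e R} {Y : ι → ι → Matrix d e R}
    (hM : ∀ i j a b, M (i, a) (j, b) = ((if i = j then X i else 0) - Y i j) a b) :
    M = comp _ _ _ _ R (diagonal X - of Y) := by
  ext ⟨i, a⟩ ⟨j, b⟩
  exact hM i j a b

variable [Fintype e] [NonUnitalNonAssocSemiring R]

theorem comp_mul_comp [Fintype κ] (M : Matrix ι κ (Matrix d e R)) (N : Matrix κ μ (Matrix e f R)) :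
    comp _ _ _ _ R M * comp _ _ _ _ R N =
      comp _ _ _ _ R (of fun i k => ∑ j, M i j * N j k) := by
  ext ⟨i, a⟩ ⟨k, b⟩
  simp [mul_apply, Matrix.sum_apply, Fintype.sum_prod_type]

theorem comp_diagonal_mul_comp [Fintype ι] [DecidableEq ι] (X : ι → Matrix d e R)
    (M : Matrix ι κ (Matrix e f R)) :
    comp _ _ _ _ R (diagonal X) * comp _ _ _ _ R M =
      comp _ _ _ _ R (of fun i j => X i * M i j) := by
  rw [comp_mul_comp]
  congr! 4 with i j
  rw [Fintype.sum_eq_single i fun k hk => by rw [diagonal_apply_ne' _ hk, Matrix.zero_mul],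
    diagonal_apply_eq]

theorem comp_mul_comp_diagonal [Fintype κ] [DecidableEq κ] (M : Matrix ι κ (Matrix d e R))
    (X : κ → Matrix e f R) :
    comp _ _ _ _ R M * comp _ _ _ _ R (diagonal X) =
      comp _ _ _ _ R (of fun i j => M i j * X j) := by
  rw [comp_mul_comp]
  congr! 4 with i j
  rw [Fintype.sum_eq_single j fun k hk => by rw [diagonal_apply_ne _ hk, Matrix.mul_zero],
    diagonal_apply_eq]

end Blocks

section Partition

variable {ι κ d e f R : Type*} [Fintype κ] [DecidableEq κ] [Fintype d] [DecidableEq d]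

/-- The characteristic matrix of the partition of `ι` into the fibres of `c`, over any semiring and
with index types in place of sizes. Rows and columns are indexed by pairs (agent or cell, state
coordinate); a cell outside the range of `c` is empty. -/
def partitionMatrix (R d : Type*) [DecidableEq d] [Zero R] [One R] (c : ι → κ) :
    Matrix (ι × d) (κ × d) R :=
  comp _ _ _ _ R ((1 : Matrix κ κ (Matrix d d R)).submatrix c id)

theorem partitionMatrix_mul_comp [NonAssocSemiring R] (c : ι → κ)
    (M : Matrix κ f (Matrix d e R)) :
    partitionMatrix R d c * comp _ _ _ _ R M = comp _ _ _ _ R (M.submatrix c id) := by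
  have partitionMatrix_eq : partitionMatrix R d c =
      (1 : Matrix (κ × d) (κ × d) R).submatrix (Prod.map c id) (Equiv.refl _) := by
    rw [← comp_one]
    rfl
  rw [partitionMatrix_eq, one_submatrix_mul]
  rfl

variable [Fintype ι] [Fintype e] [Semiring R] {c : ι → κ} {C : κ → Matrix d e R}

theorem comp_diagonal_mul_partitionMatrix_mul [DecidableEq ι] {A : ι → Matrix d d R}
    {Q : κ → Matrix e e R} (hQ : ∀ i, A i * C (c i) = C (c i) * Q (c i)) :
    comp _ _ _ _ R (diagonal A) * (partitionMatrix R d c * comp _ _ _ _ R (diagonal C)) =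
      partitionMatrix R d c * comp _ _ _ _ R (diagonal C) * comp _ _ _ _ R (diagonal Q) := by
  rw [Matrix.mul_assoc (partitionMatrix R d c), comp_diagonal_mul_comp, partitionMatrix_mul_comp,
    partitionMatrix_mul_comp, comp_diagonal_mul_comp]
  congr 1
  ext i j : 2
  by_cases hij : c i = j
  · subst hij
    simp [hQ]
  · simp [diagonal_apply_ne _ hij]

theorem comp_mul_partitionMatrix_mul {G : ι → Matrix d d R} {L : Matrix ι ι (Matrix d d R)}
    {Lπ : Matrix κ κ (Matrix d d R)} {Q : Matrix κ κ (Matrix e e R)}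
    (hL : comp _ _ _ _ R L * partitionMatrix R d c = partitionMatrix R d c * comp _ _ _ _ R Lπ)
    (hQ : ∀ i j, G i * Lπ (c i) j * C j = C (c i) * Q (c i) j) :
    comp _ _ _ _ R (of fun i j => G i * L i j) *
        (partitionMatrix R d c * comp _ _ _ _ R (diagonal C)) =
      partitionMatrix R d c * comp _ _ _ _ R (diagonal C) * comp _ _ _ _ R Q := by
  classical
  calc
    _ = comp _ _ _ _ R (diagonal G) * (comp _ _ _ _ R L * partitionMatrix R d c) *
          comp _ _ _ _ R (diagonal C) := by
      rw [← comp_diagonal_mul_comp]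
      simp only [Matrix.mul_assoc]
    _ = comp _ _ _ _ R (of fun i j => G i * Lπ (c i) j * C j) := by
      rw [hL, partitionMatrix_mul_comp, comp_diagonal_mul_comp, comp_mul_comp_diagonal]
      rfl
    _ = comp _ _ _ _ R (of fun i j => C (c i) * Q (c i) j) := by
      simp only [hQ]
    _ = _ := by
      rw [Matrix.mul_assoc, comp_diagonal_mul_comp, partitionMatrix_mul_comp]
      rfl

end Partition

theorem lemma3_heterogeneous_general {ι κ d p q R : Type*} [Fintype ι] [DecidableEq ι]
    [Fintype κ] [DecidableEq κ] [Fintype d] [DecidableEq d] [Fintype p] [Fintype q] [CommRing R]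
    (c : ι → κ) (A : ι → Matrix d d R) (B : ι → Matrix d p R) (K : Matrix p d R)
    (C : κ → Matrix d q R) (L : Matrix ι ι (Matrix d d R)) (Lπ : Matrix κ κ (Matrix d d R))
    (hLP : comp _ _ _ _ R L * partitionMatrix R d c = partitionMatrix R d c * comp _ _ _ _ R Lπ)
    (Q₁ : κ → Matrix q q R) (hQ₁ : ∀ r, A r * C (c r) = C (c r) * Q₁ (c r))
    (Q₂ : Matrix κ κ (Matrix q q R))
    (hQ₂ : ∀ r j, B r * K * Lπ (c r) j * C j = C (c r) * Q₂ (c r) j) :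
    letI L' := comp _ _ _ _ R (diagonal A - of fun i j => B i * K * L i j)
    letI P' := partitionMatrix R d c * comp _ _ _ _ R (diagonal C)
    L' * P' = P' * comp _ _ _ _ R (diagonal Q₁ - Q₂) ∧
      Submodule.map L'.mulVecLin (LinearMap.range P'.mulVecLin) ≤
        LinearMap.range P'.mulVecLin := by
  rw [and_iff_left_of_imp map_range_mulVecLin_le_of_mul_eq_mul, comp_sub, comp_sub,
    Matrix.sub_mul, Matrix.mul_sub, comp_diagonal_mul_partitionMatrix_mul hQ₁,
    comp_mul_partitionMatrix_mul hLP hQ₂]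

theorem charM_eq_partitionMatrix {n s d : ℕ} (c : Fin n → Fin s) :
    charM n s d c = partitionMatrix ℝ (Fin d) c := by
  ext ⟨i, a⟩ ⟨j, b⟩
  by_cases hij : c i = j <;> simp [charM, partitionMatrix, one_apply, hij]

theorem bdiag_eq_comp_diagonal {n d q : ℕ} (X : Matrix (Fin d) (Fin q) ℝ) :
    bdiag n X = comp _ _ _ _ ℝ (diagonal fun _ => X) := by
  ext ⟨i, a⟩ ⟨j, b⟩
  by_cases hij : i = j <;> simp [bdiag, hij]

/-- Lemma 3 (heterogeneous version of Lemma 2): agents in the same cell have the same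
dynamics; under the corresponding intertwining conditions, `L̃' P̃ = P̃ Q'` and the
column space of `P̃` is `L̃'`-invariant. -/
theorem lemma3_heterogeneous {n s d p q : ℕ}
    (c : Fin n → Fin s) (hc : Function.Surjective c)
    (A : Fin n → Matrix (Fin d) (Fin d) ℝ) (B : Fin n → Matrix (Fin d) (Fin p) ℝ)
    (hA : ∀ i j, c i = c j → A i = A j)
    (hB : ∀ i j, c i = c j → B i = B j)
    (K : Matrix (Fin p) (Fin d) ℝ) (C : Matrix (Fin d) (Fin q) ℝ)
    (L : Matrix (Fin n × Fin d) (Fin n × Fin d) ℝ)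
    (Lπ : Matrix (Fin s × Fin d) (Fin s × Fin d) ℝ)
    (hLP : L * charM n s d c = charM n s d c * Lπ)
    (L' : Matrix (Fin n × Fin d) (Fin n × Fin d) ℝ)
    (hL' : ∀ (i j : Fin n) (a b : Fin d),
      L' (i, a) (j, b) = ((if i = j then A i else 0) - B i * K * blockOf L i j) a b)
    (Q₁ : Fin s → Matrix (Fin q) (Fin q) ℝ)
    (hQ₁ : ∀ r : Fin n, A r * C = C * Q₁ (c r))
    (Q₂ : Fin s → Fin s → Matrix (Fin q) (Fin q) ℝ)
    (hQ₂ : ∀ (r : Fin n) (j : Fin s),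
      B r * K * blockOf Lπ (c r) j * C = C * Q₂ (c r) j)
    (Q' : Matrix (Fin s × Fin q) (Fin s × Fin q) ℝ)
    (hQ' : ∀ (i j : Fin s) (a b : Fin q),
      Q' (i, a) (j, b) = ((if i = j then Q₁ i else 0) - Q₂ i j) a b) :
    L' * (charM n s d c * bdiag s C) = (charM n s d c * bdiag s C) * Q' ∧
      Submodule.map L'.mulVecLin
          (LinearMap.range (charM n s d c * bdiag s C).mulVecLin)
        ≤ LinearMap.range (charM n s d c * bdiag s C).mulVecLin := by
  rw [charM_eq_partitionMatrix] at hLP ⊢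
  rw [bdiag_eq_comp_diagonal, eq_comp_diagonal_sub hL', eq_comp_diagonal_sub hQ']
  exact lemma3_heterogeneous_general c A B K (fun _ => C) (of (blockOf L)) (of (blockOf Lπ))
    hLP Q₁ hQ₁ (of Q₂) hQ₂
end

section
/- (Dual version of Lemma 2.) Suppose L is symmetric (Lᵀ = L) and L · P_π = P_π · L_π, where L_π ∈ ℝ^{(s·d)×(s·d)} has d×d blocks (L_π)_{ij}. Suppose there exist Q₁* ∈ ℝ^{q×q} with Aᵀ·C = C·Q₁* and matrices Q*_{ij} ∈ ℝ^{q×q} (i, j ∈ Fin s) with (L_π)_{ij}·Kᵀ·Bᵀ·C = C·Q*_{ij} for all i, j. Let Q* ∈ ℝ^{(s·q)×(s·q)} be the block matrix whose (i,j) block is (if i = j then Q₁* else 0) − Q*_{ij}. Then L̃ᵀ · P̃ = P̃ · Q*, where L̃ᵀ = blockDiag_n(Aᵀ) − Lᵀ·blockDiag_n(Kᵀ·Bᵀ) is the transpose of L̃ = blockDiag_n(A) − blockDiag_n(B·K)·L; consequently the column space of P̃ is invariant under the linear map x ↦ L̃ᵀ.mulVec x. -/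
open Matrix

/-!
Block-diagonal matrices are the Kronecker products `1 ⊗ₖ X`, and the characteristic matrix of a
partition is `S ⊗ₖ 1` for its `0`-`1` indicator matrix `S`. Since `1 ⊗ₖ X` and `S ⊗ₖ 1` commute up
to a change of index set, `Lᵀ (S ⊗ₖ 1) = (S ⊗ₖ 1) Lπ` makes `S ⊗ₖ 1` intertwine `L̃ᵀ` with the
quotient matrix `1 ⊗ₖ Aᵀ - Lπ (1 ⊗ₖ KᵀBᵀ)`. The hypotheses on `C` say, block by block, that
`1 ⊗ₖ C` intertwines this quotient with `Q*`, and intertwining relations compose.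
-/

open scoped Kronecker

section Blocks

variable {m r d e f R : Type*} [NonAssocSemiring R] [Fintype e]

theorem comp_mul_one_kronecker [Fintype r] [DecidableEq r] (M : Matrix m r (Matrix d e R))
    (X : Matrix e f R) :
    comp m r d e R M * ((1 : Matrix r r R) ⊗ₖ X) = comp m r d f R (.of fun i j => M i j * X) := by
  ext ⟨i, a⟩ ⟨j, b⟩
  simp [mul_apply, one_apply, Fintype.sum_prod_type_right]

theorem one_kronecker_mul_comp [Fintype m] [DecidableEq m] (X : Matrix d e R)
    (M : Matrix m r (Matrix e f R)) :
    ((1 : Matrix m m R) ⊗ₖ X) * comp m r e f R M = comp m r d f R (.of fun i j => X * M i j) := by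
  ext ⟨i, a⟩ ⟨j, b⟩
  simp [mul_apply, one_apply, Fintype.sum_prod_type_right]

end Blocks

theorem eq_one_kronecker_sub_comp {m q R : Type*} [DecidableEq m] [NonAssocRing R]
    {M : Matrix (m × q) (m × q) R} {X : Matrix q q R} {Y : m → m → Matrix q q R}
    (h : ∀ i j a b, M (i, a) (j, b) = ((if i = j then X else 0) - Y i j) a b) :
    M = (1 : Matrix m m R) ⊗ₖ X - comp m m q q R (of Y) := by
  ext ⟨i, a⟩ ⟨j, b⟩
  rcases eq_or_ne i j with rfl | hij <;> simp [*]

theorem one_kronecker_mul_kronecker_one {m r d e R : Type*} [Fintype m] [DecidableEq m] [Fintype r]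
    [DecidableEq r] [Fintype d] [DecidableEq d] [Fintype e] [DecidableEq e] [CommSemiring R]
    (S : Matrix m r R) (X : Matrix d e R) :
    ((1 : Matrix m m R) ⊗ₖ X) * (S ⊗ₖ (1 : Matrix e e R)) =
      (S ⊗ₖ (1 : Matrix d d R)) * ((1 : Matrix r r R) ⊗ₖ X) := by
  simp only [← mul_kronecker_mul, Matrix.one_mul, Matrix.mul_one]

section Intertwining

variable {m r k R : Type*} [Fintype m] [Fintype r] [Fintype k]

theorem mul_mul_eq_of_intertwine [NonUnitalSemiring R] {M : Matrix m m R} {N : Matrix r r R}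
    {Q : Matrix k k R} {P : Matrix m r R} {T : Matrix r k R} (hP : M * P = P * N)
    (hT : N * T = T * Q) : M * (P * T) = P * T * Q := by
  rw [← Matrix.mul_assoc, hP, Matrix.mul_assoc, hT, Matrix.mul_assoc]

theorem map_range_mulVecLin_le_of_mul_eq [CommSemiring R] {M : Matrix m m R} {P : Matrix m r R}
    {Q : Matrix r r R} (h : M * P = P * Q) :
    Submodule.map M.mulVecLin (LinearMap.range P.mulVecLin) ≤ LinearMap.range P.mulVecLin := by
  rw [← LinearMap.range_comp, ← mulVecLin_mul, h, mulVecLin_mul]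
  exact LinearMap.range_comp_le_range _ _

end Intertwining

section Network

variable {m r d p q R : Type*} [Fintype m] [DecidableEq m] [Fintype d] [CommRing R]

theorem transpose_one_kronecker_sub_mul (A F : Matrix d d R) (L : Matrix (m × d) (m × d) R) :
    ((1 : Matrix m m R) ⊗ₖ A - ((1 : Matrix m m R) ⊗ₖ F) * L)ᵀ =
      (1 : Matrix m m R) ⊗ₖ Aᵀ - Lᵀ * ((1 : Matrix m m R) ⊗ₖ Fᵀ) := by
  simp only [transpose_sub, transpose_mul, ← kroneckerMap_transpose, transpose_one]

theorem one_kronecker_sub_mul_kronecker_one [Fintype r] [DecidableEq r] [DecidableEq d]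
    {S : Matrix m r R} {L : Matrix (m × d) (m × d) R} {Lπ : Matrix (r × d) (r × d) R}
    (hL : L * (S ⊗ₖ (1 : Matrix d d R)) = (S ⊗ₖ (1 : Matrix d d R)) * Lπ) (A F : Matrix d d R) :
    ((1 : Matrix m m R) ⊗ₖ A - L * ((1 : Matrix m m R) ⊗ₖ F)) * (S ⊗ₖ (1 : Matrix d d R)) =
      (S ⊗ₖ (1 : Matrix d d R)) *
        ((1 : Matrix r r R) ⊗ₖ A - Lπ * ((1 : Matrix r r R) ⊗ₖ F)) := by
  rw [Matrix.sub_mul, Matrix.mul_sub, one_kronecker_mul_kronecker_one, Matrix.mul_assoc L,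
    one_kronecker_mul_kronecker_one, ← Matrix.mul_assoc L, hL, Matrix.mul_assoc]

theorem one_kronecker_sub_comp_mul_one_kronecker [Fintype q] {A F : Matrix d d R}
    {C : Matrix d q R} {Q₁ : Matrix q q R} {Λ : Matrix m m (Matrix d d R)}
    {Q : Matrix m m (Matrix q q R)} (hA : A * C = C * Q₁) (hΛ : ∀ i j, Λ i j * F * C = C * Q i j) :
    ((1 : Matrix m m R) ⊗ₖ A - comp m m d d R Λ * ((1 : Matrix m m R) ⊗ₖ F)) *
        ((1 : Matrix m m R) ⊗ₖ C) =
      ((1 : Matrix m m R) ⊗ₖ C) * ((1 : Matrix m m R) ⊗ₖ Q₁ - comp m m q q R Q) := by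
  have diagonal_part : ((1 : Matrix m m R) ⊗ₖ A) * ((1 : Matrix m m R) ⊗ₖ C) =
      ((1 : Matrix m m R) ⊗ₖ C) * ((1 : Matrix m m R) ⊗ₖ Q₁) := by
    rw [← mul_kronecker_mul, ← mul_kronecker_mul, hA]
  have coupling_part : comp m m d d R Λ * ((1 : Matrix m m R) ⊗ₖ F) * ((1 : Matrix m m R) ⊗ₖ C) =
      ((1 : Matrix m m R) ⊗ₖ C) * comp m m q q R Q := by
    simp only [comp_mul_one_kronecker, one_kronecker_mul_comp, of_apply, hΛ]
  rw [Matrix.sub_mul, Matrix.mul_sub, diagonal_part, coupling_part]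

theorem lemma5_dual_intertwining_general [Fintype r] [DecidableEq r] [DecidableEq d] [Fintype p]
    [Fintype q] (S : Matrix m r R) (A : Matrix d d R) (B : Matrix d p R) (K : Matrix p d R)
    (C : Matrix d q R) (L : Matrix (m × d) (m × d) R) (Lπ : Matrix r r (Matrix d d R))
    (hLS : Lᵀ * (S ⊗ₖ (1 : Matrix d d R)) = (S ⊗ₖ (1 : Matrix d d R)) * comp r r d d R Lπ)
    (Q₁ : Matrix q q R) (hQ₁ : Aᵀ * C = C * Q₁) (Q : Matrix r r (Matrix q q R))
    (hQ : ∀ i j, Lπ i j * Kᵀ * Bᵀ * C = C * Q i j) :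
    let Ltilde := (1 : Matrix m m R) ⊗ₖ A - ((1 : Matrix m m R) ⊗ₖ (B * K)) * L
    let Ptilde := (S ⊗ₖ (1 : Matrix d d R)) * ((1 : Matrix r r R) ⊗ₖ C)
    Ltildeᵀ * Ptilde = Ptilde * ((1 : Matrix r r R) ⊗ₖ Q₁ - comp r r q q R Q) ∧
      Submodule.map Ltildeᵀ.mulVecLin (LinearMap.range Ptilde.mulVecLin) ≤
        LinearMap.range Ptilde.mulVecLin := by
  intro Ltilde Ptilde
  have hQ_transpose : ∀ i j, Lπ i j * (B * K)ᵀ * C = C * Q i j := fun i j => by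
    rw [transpose_mul, ← Matrix.mul_assoc, hQ]
  have quotient : Ltildeᵀ * (S ⊗ₖ (1 : Matrix d d R)) = (S ⊗ₖ (1 : Matrix d d R)) *
      ((1 : Matrix r r R) ⊗ₖ Aᵀ - comp r r d d R Lπ * ((1 : Matrix r r R) ⊗ₖ (B * K)ᵀ)) := by
    rw [transpose_one_kronecker_sub_mul, one_kronecker_sub_mul_kronecker_one hLS]
  have intertwining := mul_mul_eq_of_intertwine quotient
    (one_kronecker_sub_comp_mul_one_kronecker hQ₁ hQ_transpose)
  exact ⟨intertwining, map_range_mulVecLin_le_of_mul_eq intertwining⟩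

end Network

theorem bdiag_eq_one_kronecker (n : ℕ) {d q : ℕ} (X : Matrix (Fin d) (Fin q) ℝ) :
    bdiag n X = (1 : Matrix (Fin n) (Fin n) ℝ) ⊗ₖ X := by
  ext ⟨i, a⟩ ⟨j, b⟩
  simp [bdiag, one_apply]

theorem charM_eq_kronecker_one {n s : ℕ} (d : ℕ) (c : Fin n → Fin s) :
    charM n s d c =
      (1 : Matrix (Fin s) (Fin s) ℝ).submatrix c id ⊗ₖ (1 : Matrix (Fin d) (Fin d) ℝ) := by
  ext ⟨i, a⟩ ⟨j, b⟩
  simp [charM, one_apply, ← ite_and, and_comm]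

/-- Lemma 5 (dual version of Lemma 2): if `L` is symmetric, `L P_π = P_π L_π`,
`Aᵀ C = C Q₁*` and `(L_π)_{ij} Kᵀ Bᵀ C = C Q*_{ij}`, then `L̃ᵀ P̃ = P̃ Q*` and the
column space of `P̃` is `L̃ᵀ`-invariant. -/
theorem lemma5_dual_intertwining {n s d p q : ℕ}
    (c : Fin n → Fin s) (hc : Function.Surjective c)
    (A : Matrix (Fin d) (Fin d) ℝ) (B : Matrix (Fin d) (Fin p) ℝ)
    (K : Matrix (Fin p) (Fin d) ℝ) (C : Matrix (Fin d) (Fin q) ℝ)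
    (L : Matrix (Fin n × Fin d) (Fin n × Fin d) ℝ)
    (hLsym : Lᵀ = L)
    (Lπ : Matrix (Fin s × Fin d) (Fin s × Fin d) ℝ)
    (hLP : L * charM n s d c = charM n s d c * Lπ)
    (Q₁s : Matrix (Fin q) (Fin q) ℝ)
    (hQ₁s : Aᵀ * C = C * Q₁s)
    (Qs : Fin s → Fin s → Matrix (Fin q) (Fin q) ℝ)
    (hQs : ∀ i j, blockOf Lπ i j * Kᵀ * Bᵀ * C = C * Qs i j)
    (Qstar : Matrix (Fin s × Fin q) (Fin s × Fin q) ℝ)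
    (hQstar : ∀ (i j : Fin s) (a b : Fin q),
      Qstar (i, a) (j, b) = ((if i = j then Q₁s else 0) - Qs i j) a b) :
    (bdiag n A - bdiag n (B * K) * L)ᵀ * (charM n s d c * bdiag s C)
        = (charM n s d c * bdiag s C) * Qstar ∧
      Submodule.map (bdiag n A - bdiag n (B * K) * L)ᵀ.mulVecLin
          (LinearMap.range (charM n s d c * bdiag s C).mulVecLin)
        ≤ LinearMap.range (charM n s d c * bdiag s C).mulVecLin := by
  rw [charM_eq_kronecker_one] at hLP
  simp only [eq_one_kronecker_sub_comp hQstar, bdiag_eq_one_kronecker, charM_eq_kronecker_one]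
  exact lemma5_dual_intertwining_general _ A B K C L (of (blockOf Lπ)) (hLsym.symm ▸ hLP)
    Q₁s hQ₁s (of Qs) hQs
end
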